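/- arXiv:1906.03062 — 2 statements merged into one kernel-verified Lean document; each statement's English description precedes it below -/
import Mathlib

section
/- Let n ≥ 2, k ≥ 2, N > 0, and let {(β_i,θ_i)}_{i=1}^{k+1} be a 1/N-quadrature rule exact for Λ_{n,k}, with nodes -1 ≤ β_1 < ⋯ < β_{k+1} < 1 and weights θ_i > 0. If for every j = 0,…,k-2 one has θ_k·q_{k-1}(β_k)·(1-β_k)·P_j^{1,0}(β_k) + θ_{k+1}·q_{k-1}(β_{k+1})·(1-β_{k+1})·P_j^{1,0}(β_{k+1}) > 0, then all coefficients e_j in the expansion q_{k-1} = ∑_{j=0}^{k-1} e_j P_j^{1,0} are positive. -/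
open MeasureTheory Finset
open scoped Classical

/-- The (unnormalized) Gegenbauer weight `(1 - t²)^((n-3)/2)`. -/
noncomputable def gegWeight (n : ℕ) (t : ℝ) : ℝ := (1 - t ^ 2) ^ (((n : ℝ) - 3) / 2)

/-- Integration against the probability measure `μ_n` on `[-1,1]` with density
proportional to `(1 - t²)^((n-3)/2)`. -/
noncomputable def gegInt (n : ℕ) (f : ℝ → ℝ) : ℝ :=
  (∫ t in Set.Icc (-1 : ℝ) 1, gegWeight n t)⁻¹ *
    ∫ t in Set.Icc (-1 : ℝ) 1, f t * gegWeight n t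

/-- `P : ℕ → ℝ[X]` is the family of Gegenbauer polynomials for dimension `n`:
`deg P_i = i`, `P_i(1) = 1`, pairwise orthogonal in `L²(μ_n)`. -/
def IsGegenbauer (n : ℕ) (P : ℕ → Polynomial ℝ) : Prop :=
  (∀ i, (P i).natDegree = i) ∧ (∀ i, (P i).eval 1 = 1) ∧
    ∀ i j, i ≠ j → gegInt n (fun t => (P i).eval t * (P j).eval t) = 0

/-- A `1/N`-quadrature rule with nodes `α` and weights `ρ`, exact for a set `Λ`
of functions on `[-1,1]`. -/
def IsQuadratureRule (n : ℕ) (N : ℝ) {k : ℕ} (α ρ : Fin k → ℝ)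
    (Λ : Set (ℝ → ℝ)) : Prop :=
  (∀ i, -1 ≤ α i) ∧ (∀ i, α i < 1) ∧ StrictMono α ∧ (∀ i, 0 < ρ i) ∧
    ∀ f ∈ Λ, gegInt n f = f 1 / N + ∑ i, ρ i * f (α i)

/-- Integration against the probability measure `ν_n` on `[-1,1]` with density
proportional to `(1-t)(1 - t²)^((n-3)/2)`. -/
noncomputable def adjInt (n : ℕ) (f : ℝ → ℝ) : ℝ :=
  (∫ t in Set.Icc (-1 : ℝ) 1, (1 - t) * gegWeight n t)⁻¹ *
    ∫ t in Set.Icc (-1 : ℝ) 1, f t * ((1 - t) * gegWeight n t)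

/-- `Q : ℕ → ℝ[X]` is the family of adjacent polynomials `P_i^{1,0}` for dimension `n`:
`deg Q_i = i`, `Q_i(1) = 1`, pairwise orthogonal in `L²(ν_n)`. -/
def IsAdjacent (n : ℕ) (Q : ℕ → Polynomial ℝ) : Prop :=
  (∀ i, (Q i).natDegree = i) ∧ (∀ i, (Q i).eval 1 = 1) ∧
    ∀ i j, i ≠ j → adjInt n (fun t => (Q i).eval t * (Q j).eval t) = 0

/-- Membership of a polynomial in `Λ_{n,k} = 𝒫_{2k-1} ⊕ span{P_{2k+2}, P_{2k+3}}`: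
degree at most `2k+3` and orthogonality to `P_{2k}` and `P_{2k+1}` in `L²(μ_n)`. -/
def InLambda (n k : ℕ) (P : ℕ → Polynomial ℝ) (p : Polynomial ℝ) : Prop :=
  p.natDegree ≤ 2 * k + 3 ∧
    gegInt n (fun t => p.eval t * (P (2 * k)).eval t) = 0 ∧
    gegInt n (fun t => p.eval t * (P (2 * k + 1)).eval t) = 0

/-- The space `Λ_{n,k}`, as a set of functions on `ℝ`. -/
def LambdaSpace (n k : ℕ) (P : ℕ → Polynomial ℝ) : Set (ℝ → ℝ) :=
  {f | ∃ p : Polynomial ℝ, InLambda n k P p ∧ f = fun t => p.eval t}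

/-!
Write `M p = L (p * (b - X))`, where `L` is integration against `μ_n` and `b = 1`, so that the
`P_j^{1,0}` are orthogonal for `M`. With `q` the partial product of degree `m = k - 1`, the
coefficient `e j` has the sign of `M (q * P_j^{1,0})`. For `j < m` the polynomial
`q * P_j^{1,0} * (b - X)` has degree at most `2 * m`, so the quadrature rule evaluates this number
exactly; the endpoint `b` and the zeros of `q` drop out, leaving the two terms assumed to have a
positive sum. For `j = m`, comparing leading coefficients shows that `e m` is the inverse of the
leading coefficient of `P_m^{1,0}`, which is positive because all real zeros of `P_m^{1,0}` lie to
the left of `b` while its value at `b` is positive.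
-/

section OrthogonalSequence

open Polynomial

theorem C_sub_X_ne_zero {R : Type*} [Ring R] [Nontrivial R] (a : R) : (C a - X : R[X]) ≠ 0 :=
  sub_ne_zero.2 (X_ne_C a).symm

theorem degree_eq_of_natDegree_eq_of_eval_ne_zero {R : Type*} [Semiring R] {p : R[X]} {x : R}
    {m : ℕ} (hdeg : p.natDegree = m) (hx : p.eval x ≠ 0) : p.degree = m := by
  rw [degree_eq_natDegree (by rintro rfl; simp at hx), hdeg]

/-- A family of polynomials is orthogonal for a linear functional `L` if it is orthogonal for the
symmetric bilinear form `(p, q) ↦ L (p * q)`; no normalization of `L (Q i * Q i)` is imposed. -/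
def IsOrthogonalFor {ι R : Type*} [CommSemiring R] (L : R[X] →ₗ[R] R) (Q : ι → R[X]) : Prop :=
  Pairwise fun i j => L (Q i * Q j) = 0

theorem IsOrthogonalFor.apply_sum_C_mul_mul {ι R : Type*} [CommSemiring R] {L : R[X] →ₗ[R] R}
    {Q : ι → R[X]} (hQ : IsOrthogonalFor L Q) (e : ι → R) {t : Finset ι} {j : ι} (hj : j ∈ t) :
    L ((∑ i ∈ t, C (e i) * Q i) * Q j) = e j * L (Q j * Q j) := by
  have hterm (i : ι) : L (C (e i) * Q i * Q j) = e i * L (Q i * Q j) := by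
    rw [mul_assoc, ← smul_eq_C_mul, map_smul, smul_eq_mul]
  simp only [Finset.sum_mul, map_sum, hterm]
  exact Finset.sum_eq_single_of_mem j hj fun i _ hij => by rw [hQ hij, mul_zero]

theorem IsOrthogonalFor.apply_mul_eq_zero_of_degree_lt {K : Type*} [Field K] {L : K[X] →ₗ[K] K}
    {Q : Sequence K} (hQ : IsOrthogonalFor L Q) {p : K[X]} {m : ℕ} (hp : p.degree < m) :
    L (p * Q m) = 0 := by
  have hspan : p ∈ Submodule.span K (Q '' Set.Iio m) := by
    rwa [Q.span_degreeLT (by simp), mem_degreeLT]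
  have hker : Submodule.span K (Q '' Set.Iio m) ≤ (L ∘ₗ LinearMap.mulRight K (Q m)).ker :=
    Submodule.span_le.2 (by rintro _ ⟨i, hi, rfl⟩; exact hQ (ne_of_lt hi))
  exact hker hspan

theorem coeff_sum_range_succ_C_mul {R : Type*} [Semiring R] (Q : Sequence R) (e : ℕ → R) (m : ℕ) :
    (∑ j ∈ range (m + 1), C (e j) * Q j).coeff m = e m * (Q m).leadingCoeff := by
  have hlow : ∀ j ∈ range m, (C (e j) * Q j).coeff m = 0 := fun j hj => by
    rw [coeff_C_mul, coeff_eq_zero_of_natDegree_lt (by simpa using hj), mul_zero]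
  rw [finsetSum_coeff, Finset.sum_range_succ, Finset.sum_eq_zero hlow, zero_add, coeff_C_mul,
    leadingCoeff, Q.natDegree_eq]

end OrthogonalSequence

section PositiveFunctional

open Polynomial

/-- A linear functional on real polynomials is positive on `s` if it is strictly positive on every
nonzero polynomial that is nonnegative on `s`. This abstracts integration against a measure
carried by `s` with infinite support. -/
def IsPositiveOn (L : ℝ[X] →ₗ[ℝ] ℝ) (s : Set ℝ) : Prop :=
  ∀ p : ℝ[X], p ≠ 0 → (∀ t ∈ s, 0 ≤ p.eval t) → 0 < L p

namespace IsPositiveOn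

variable {L : ℝ[X] →ₗ[ℝ] ℝ} {s : Set ℝ}

theorem apply_mul_self_pos (hL : IsPositiveOn L s) {p : ℝ[X]} (hp : p ≠ 0) : 0 < L (p * p) :=
  hL _ (mul_ne_zero hp hp) fun t _ => by simpa only [eval_mul] using mul_self_nonneg (p.eval t)

theorem comp_mulRight (hL : IsPositiveOn L s) {w : ℝ[X]} (hw : w ≠ 0)
    (hw_nonneg : ∀ t ∈ s, 0 ≤ w.eval t) : IsPositiveOn (L ∘ₗ LinearMap.mulRight ℝ w) s :=
  fun p hp hp_nonneg => hL (p * w) (mul_ne_zero hp hw) fun t ht => by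
    simpa only [eval_mul] using mul_nonneg (hp_nonneg t ht) (hw_nonneg t ht)

theorem apply_sum_C_mul_mul_pos_iff (hL : IsPositiveOn L s) {ι : Type*} {Q : ι → ℝ[X]}
    (hQ : IsOrthogonalFor L Q) {e : ι → ℝ} {t : Finset ι} {j : ι} (hj : j ∈ t) (hQj : Q j ≠ 0) :
    0 < L ((∑ i ∈ t, C (e i) * Q i) * Q j) ↔ 0 < e j := by
  rw [hQ.apply_sum_C_mul_mul e hj, mul_pos_iff_of_pos_right (hL.apply_mul_self_pos hQj)]

variable {Q : Sequence ℝ} {b : ℝ}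

-- A root `r ≥ b` would give `Q m = (X - r) * R`, with `R * Q m = (X - r) * R ^ 2` nonpositive on
-- `s` although `L (R * Q m) = 0`.
theorem lt_of_isRoot (hL : IsPositiveOn L s) (hs : s ⊆ Set.Iic b)
    (hQ : IsOrthogonalFor L Q) {m : ℕ} {r : ℝ} (hr : (Q m).IsRoot r) :
    r < b := by
  by_contra! hbr
  obtain ⟨R, hR⟩ := dvd_iff_isRoot.2 hr
  have hR0 : R ≠ 0 := right_ne_zero_of_mul (hR ▸ Q.ne_zero m)
  have hdeg : R.degree < m := by
    rw [← Q.degree_eq m, hR]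
    exact degree_lt_degree (by rw [natDegree_mul (X_sub_C_ne_zero r) hR0, natDegree_X_sub_C]; lia)
  have hpos : 0 < L (-(R * Q m)) := by
    refine hL _ (neg_ne_zero.2 (mul_ne_zero hR0 (Q.ne_zero m))) fun t ht => ?_
    have heval : (-(R * Q m)).eval t = (r - t) * R.eval t ^ 2 := by
      rw [hR]
      simp only [eval_neg, eval_mul, eval_sub, eval_X, eval_C]
      ring
    rw [heval]
    exact mul_nonneg (sub_nonneg.2 ((hs ht).trans hbr)) (sq_nonneg _)
  rw [map_neg, hQ.apply_mul_eq_zero_of_degree_lt hdeg, neg_zero] at hpos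
  exact hpos.false

theorem leadingCoeff_pos (hL : IsPositiveOn L s) (hs : s ⊆ Set.Iic b)
    (hQ : IsOrthogonalFor L Q) {m : ℕ} (hQb : 0 < (Q m).eval b) :
    0 < (Q m).leadingCoeff := by
  by_contra! hlc
  exact hQb.not_gt <|
    eval_lt_zero_of_roots_lt_of_leadingCoeff_nonpos (fun _ hr => hL.lt_of_isRoot hs hQ hr) hlc

end IsPositiveOn

end PositiveFunctional

section Gegenbauer

open Polynomial

theorem setIntegral_eval_mul_pos {a b : ℝ} (hab : a < b) {w : ℝ → ℝ}
    (hw : ∀ t ∈ Set.Ioo a b, 0 < w t) {p : ℝ[X]} (hp : p ≠ 0)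
    (hp_nonneg : ∀ t ∈ Set.Ioo a b, 0 ≤ p.eval t)
    (hint : IntegrableOn (fun t => p.eval t * w t) (Set.Icc a b)) :
    0 < ∫ t in Set.Icc a b, p.eval t * w t := by
  rw [integral_Icc_eq_integral_Ioo, setIntegral_pos_iff_support_of_nonneg_ae]
  · have hsupp : Set.Ioo a b \ p.roots.toFinset ⊆
        Function.support (fun t => p.eval t * w t) ∩ Set.Ioo a b := fun t ht =>
      ⟨mul_ne_zero (fun h => ht.2 (by simp [hp, h])) (hw t ht.1).ne', ht.1⟩
    refine lt_of_lt_of_le ?_ (measure_mono hsupp)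
    rw [measure_sdiff_null (Finset.measure_zero _ _)]
    exact (Measure.measure_Ioo_pos _).2 hab
  · filter_upwards [ae_restrict_mem measurableSet_Ioo] with t ht
    exact mul_nonneg (hp_nonneg t ht) (hw t ht).le
  · exact hint.mono_set Set.Ioo_subset_Icc_self

theorem integrableOn_one_sub_sq_rpow {a : ℝ} (ha : -1 < a) :
    IntegrableOn (fun t : ℝ => (1 - t ^ 2) ^ a) (Set.Icc (-1) 1) := by
  have hright : IntervalIntegrable (fun t : ℝ => (1 - t ^ 2) ^ a) volume 0 1 := by
    have hsing : IntervalIntegrable (fun t : ℝ => (1 - t) ^ a) volume 0 1 := by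
      simpa using (intervalIntegral.intervalIntegrable_rpow' ha (a := 1) (b := 0)).comp_sub_left 1
    have hcont : ContinuousOn (fun t : ℝ => (1 + t) ^ a) (Set.uIcc 0 1) := by
      rw [Set.uIcc_of_le zero_le_one]
      exact ContinuousOn.rpow_const (by fun_prop) fun t ht => .inl (by linarith [ht.1])
    refine (hsing.continuousOn_mul hcont).congr fun t ht => ?_
    rw [Set.uIoc_of_le zero_le_one] at ht
    rw [← Real.mul_rpow (by linarith [ht.1]) (by linarith [ht.2])]
    ring_nf
  have hleft : IntervalIntegrable (fun t : ℝ => (1 - t ^ 2) ^ a) volume (-1) 0 := by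
    simpa using ((IntervalIntegrable.iff_comp_neg).1 hright).symm
  rw [integrableOn_Icc_iff_integrableOn_Ioc,
    ← intervalIntegrable_iff_integrableOn_Ioc_of_le (by norm_num)]
  exact hleft.trans hright

theorem gegWeight_pos (n : ℕ) {t : ℝ} (ht : t ∈ Set.Ioo (-1 : ℝ) 1) : 0 < gegWeight n t :=
  Real.rpow_pos_of_pos (by nlinarith [ht.1, ht.2]) _

variable {n : ℕ}

theorem integrableOn_eval_mul_gegWeight (hn : 2 ≤ n) (p : ℝ[X]) :
    IntegrableOn (fun t => p.eval t * gegWeight n t) (Set.Icc (-1) 1) := by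
  have hexp : -1 < ((n : ℝ) - 3) / 2 := by
    have : (2 : ℝ) ≤ n := mod_cast hn
    linarith
  exact (integrableOn_one_sub_sq_rpow hexp).continuousOn_mul p.continuousOn isCompact_Icc

/-- Integration of polynomials against `μ_n`, as a linear functional. -/
noncomputable def gegFunctional (hn : 2 ≤ n) : ℝ[X] →ₗ[ℝ] ℝ where
  toFun p := gegInt n fun t => p.eval t
  map_add' p q := by
    simp only [gegInt, eval_add, add_mul]
    rw [integral_add (integrableOn_eval_mul_gegWeight hn p)
      (integrableOn_eval_mul_gegWeight hn q), mul_add]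
  map_smul' c p := by
    simp only [gegInt, eval_smul, smul_eq_mul, mul_assoc, RingHom.id_apply]
    rw [integral_const_mul, mul_left_comm]

theorem gegFunctional_mul (hn : 2 ≤ n) (p q : ℝ[X]) :
    gegFunctional hn (p * q) = gegInt n fun t => p.eval t * q.eval t := by
  simp [gegFunctional]

theorem isPositiveOn_gegFunctional (hn : 2 ≤ n) :
    IsPositiveOn (gegFunctional hn) (Set.Icc (-1) 1) := by
  have hpos (p : ℝ[X]) (hp : p ≠ 0) (hp_nonneg : ∀ t ∈ Set.Icc (-1 : ℝ) 1, 0 ≤ p.eval t) :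
      0 < ∫ t in Set.Icc (-1 : ℝ) 1, p.eval t * gegWeight n t :=
    setIntegral_eval_mul_pos (by norm_num) (fun _ => gegWeight_pos n) hp
      (fun t ht => hp_nonneg t (Set.Ioo_subset_Icc_self ht)) (integrableOn_eval_mul_gegWeight hn p)
  have hmass : 0 < ∫ t in Set.Icc (-1 : ℝ) 1, gegWeight n t := by
    simpa using hpos 1 one_ne_zero (by simp)
  exact fun p hp hp_nonneg => mul_pos (inv_pos.2 hmass) (hpos p hp hp_nonneg)

theorem adjInt_eq_inv_mul_gegFunctional (hn : 2 ≤ n) (p : ℝ[X]) :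
    adjInt n (fun t => p.eval t) =
      (gegFunctional hn (C 1 - X))⁻¹ * gegFunctional hn (p * (C 1 - X)) := by
  have hmass : ∫ t in Set.Icc (-1 : ℝ) 1, gegWeight n t ≠ 0 := fun h0 => by
    simpa [gegFunctional, gegInt, h0] using isPositiveOn_gegFunctional hn 1 one_ne_zero (by simp)
  simp only [adjInt, gegFunctional, gegInt, LinearMap.coe_mk, AddHom.coe_mk, eval_mul, eval_sub,
    eval_C, eval_X, mul_assoc]
  field_simp

/-- The Gegenbauer polynomials as a polynomial sequence. -/
noncomputable def IsGegenbauer.sequence {P : ℕ → ℝ[X]} (hP : IsGegenbauer n P) : Sequence ℝ :=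
  ⟨P, fun i => degree_eq_of_natDegree_eq_of_eval_ne_zero (hP.1 i) (x := 1) (by simp [hP.2.1 i])⟩

theorem IsGegenbauer.isOrthogonalFor {P : ℕ → ℝ[X]} (hP : IsGegenbauer n P) (hn : 2 ≤ n) :
    IsOrthogonalFor (gegFunctional hn) hP.sequence := fun i j hij =>
  (gegFunctional_mul hn _ _).trans (hP.2.2 i j hij)

/-- The adjacent polynomials `P_i^{1,0}` as a polynomial sequence. -/
noncomputable def IsAdjacent.sequence {Q : ℕ → ℝ[X]} (hQ : IsAdjacent n Q) : Sequence ℝ :=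
  ⟨Q, fun i => degree_eq_of_natDegree_eq_of_eval_ne_zero (hQ.1 i) (x := 1) (by simp [hQ.2.1 i])⟩

theorem IsAdjacent.isOrthogonalFor {Q : ℕ → ℝ[X]} (hQ : IsAdjacent n Q) (hn : 2 ≤ n) :
    IsOrthogonalFor (gegFunctional hn ∘ₗ LinearMap.mulRight ℝ (C 1 - X)) hQ.sequence := by
  intro i j hij
  have hmass : 0 < gegFunctional hn (C 1 - X) :=
    isPositiveOn_gegFunctional hn _ (C_sub_X_ne_zero 1) fun t ht => by
      simpa using ht.2
  have hadj : adjInt n (fun t => (Q i * Q j).eval t) = 0 := by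
    simpa only [eval_mul] using hQ.2.2 i j hij
  rw [adjInt_eq_inv_mul_gegFunctional hn] at hadj
  exact (mul_eq_zero.1 hadj).resolve_left (inv_ne_zero hmass.ne')

theorem IsGegenbauer.inLambda_of_natDegree_lt {P : ℕ → ℝ[X]} (hP : IsGegenbauer n P) (hn : 2 ≤ n)
    {k : ℕ} {p : ℝ[X]} (hp : p.natDegree < 2 * k) : InLambda n k P p := by
  have horth {m : ℕ} (hm : 2 * k ≤ m) : gegInt n (fun t => p.eval t * (P m).eval t) = 0 := by
    rw [← gegFunctional_mul hn]
    exact (hP.isOrthogonalFor hn).apply_mul_eq_zero_of_degree_lt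
      (degree_le_natDegree.trans_lt (mod_cast hp.trans_le hm))
  exact ⟨by lia, horth le_rfl, horth (Nat.le_succ _)⟩

theorem IsQuadratureRule.gegFunctional_eq {N : ℝ} {k m : ℕ} {α ρ : Fin m → ℝ} {P : ℕ → ℝ[X]}
    (hα : IsQuadratureRule n N α ρ (LambdaSpace n k P)) (hP : IsGegenbauer n P) (hn : 2 ≤ n)
    {p : ℝ[X]} (hp : p.natDegree < 2 * k) :
    gegFunctional hn p = N⁻¹ * p.eval 1 + ∑ i, ρ i * p.eval (α i) := by
  rw [← div_eq_inv_mul]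
  exact hα.2.2.2.2 _ ⟨p, hP.inLambda_of_natDegree_lt hn hp, rfl⟩

end Gegenbauer

section Quadrature

open Polynomial

variable {ι : Type*} [Fintype ι] [DecidableEq ι] {L : ℝ[X] →ₗ[ℝ] ℝ} {A : Finset ι}
  {β θ : ι → ℝ} {b c : ℝ}

theorem quadrature_nodal_mul
    (hquad : ∀ p : ℝ[X], p.natDegree ≤ 2 * #A → L p = c * p.eval b + ∑ i, θ i * p.eval (β i))
    {p : ℝ[X]} (hp : p.natDegree < #A) :
    L (Lagrange.nodal A β * p * (C b - X)) =
      ∑ i ∈ Aᶜ, θ i * (Lagrange.nodal A β).eval (β i) * (b - β i) * p.eval (β i) := by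
  have hdeg : (Lagrange.nodal A β * p * (C b - X)).natDegree ≤ 2 * #A := by
    have hlin : (C b - X : ℝ[X]).natDegree ≤ 1 := by
      rw [← neg_sub, natDegree_neg, natDegree_X_sub_C]
    have hnodal : (Lagrange.nodal A β).natDegree = #A := Lagrange.natDegree_nodal
    grw [natDegree_mul_le, natDegree_mul_le, hlin, hnodal]
    lia
  have hterm (i : ι) : θ i * (Lagrange.nodal A β * p * (C b - X)).eval (β i) =
      θ i * (Lagrange.nodal A β).eval (β i) * (b - β i) * p.eval (β i) := by
    simp only [eval_mul, eval_sub, eval_C, eval_X]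
    ring
  have hnode : ∀ i ∈ A,
      θ i * (Lagrange.nodal A β).eval (β i) * (b - β i) * p.eval (β i) = 0 := fun i hi => by
    rw [Lagrange.eval_nodal_at_node hi, mul_zero, zero_mul, zero_mul]
  have hend : (Lagrange.nodal A β * p * (C b - X)).eval b = 0 := by simp
  rw [hquad _ hdeg, hend, mul_zero, zero_add, Finset.sum_congr rfl fun i _ => hterm i,
    ← Finset.sum_add_sum_compl A, Finset.sum_eq_zero hnode, zero_add]

theorem stmt_12_general {s : Set ℝ} (hL : IsPositiveOn L s) (hs : s ⊆ Set.Iic b)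
    {Q : Sequence ℝ} (hQ : IsOrthogonalFor (L ∘ₗ LinearMap.mulRight ℝ (C b - X)) Q)
    {m : ℕ} (hA : #A = m) (hQb : 0 < (Q m).eval b)
    (hquad : ∀ p : ℝ[X], p.natDegree ≤ 2 * m → L p = c * p.eval b + ∑ i, θ i * p.eval (β i))
    (hpos : ∀ j < m, 0 < ∑ i ∈ Aᶜ,
      θ i * (Lagrange.nodal A β).eval (β i) * (b - β i) * (Q j).eval (β i))
    {e : ℕ → ℝ} (he : Lagrange.nodal A β = ∑ j ∈ range (m + 1), C (e j) * Q j) :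
    ∀ j ≤ m, 0 < e j := by
  subst hA
  have hM : IsPositiveOn (L ∘ₗ LinearMap.mulRight ℝ (C b - X)) s :=
    hL.comp_mulRight (C_sub_X_ne_zero b) fun t ht => by simpa using hs ht
  intro j hj
  rcases hj.lt_or_eq with hlt | rfl
  · rw [← hM.apply_sum_C_mul_mul_pos_iff hQ (Finset.mem_range_succ_iff.2 hj) (Q.ne_zero j), ← he]
    exact (hpos j hlt).trans_eq (quadrature_nodal_mul hquad (by simpa using hlt)).symm
  · have hlead : e #A * (Q #A).leadingCoeff = 1 := by
      rw [← coeff_sum_range_succ_C_mul, ← he, ← Lagrange.natDegree_nodal (v := β)]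
      exact Lagrange.nodal_monic
    exact pos_of_mul_pos_left (hlead ▸ one_pos) (hM.leadingCoeff_pos hs hQ hQb).le

end Quadrature

theorem sum_compl_filter_val_lt {M : Type*} [AddCommMonoid M] {m : ℕ} (f : Fin (m + 2) → M) :
    ∑ i ∈ (univ.filter fun i : Fin (m + 2) => (i : ℕ) < m)ᶜ, f i =
      f ⟨m, by lia⟩ + f (Fin.last (m + 1)) := by
  have hpair : (univ.filter fun i : Fin (m + 2) => (i : ℕ) < m)ᶜ =
      {⟨m, by lia⟩, Fin.last (m + 1)} := by
    ext i
    simp only [mem_compl, mem_filter, mem_univ, true_and, mem_insert, mem_singleton, Fin.ext_iff,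
      Fin.val_last]
    lia
  rw [hpair, Finset.sum_pair (by simp [Fin.ext_iff])]

/-- positivity of the coefficients of the partial product `q_{k-1}` in the
adjacent basis. Here `β ⟨k-1,_⟩` is the node `β_k` and `β (Fin.last k)` is `β_{k+1}`. -/
theorem stmt_12 (n : ℕ) (hn : 2 ≤ n) (k : ℕ) (hk : 2 ≤ k) (N : ℝ) (hN : 0 < N)
    (P : ℕ → Polynomial ℝ) (hP : IsGegenbauer n P)
    (Q : ℕ → Polynomial ℝ) (hQadj : IsAdjacent n Q)
    (β θ : Fin (k + 1) → ℝ)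
    (hquad : IsQuadratureRule n N β θ (LambdaSpace n k P))
    (hpos : ∀ j ≤ k - 2,
      0 < θ ⟨k - 1, by omega⟩ *
            (∏ i ∈ Finset.univ.filter (fun i : Fin (k + 1) => (i : ℕ) < k - 1),
              (β ⟨k - 1, by omega⟩ - β i)) *
            (1 - β ⟨k - 1, by omega⟩) * (Q j).eval (β ⟨k - 1, by omega⟩) +
          θ (Fin.last k) *
            (∏ i ∈ Finset.univ.filter (fun i : Fin (k + 1) => (i : ℕ) < k - 1),
              (β (Fin.last k) - β i)) *
            (1 - β (Fin.last k)) * (Q j).eval (β (Fin.last k)))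
    (e : ℕ → ℝ)
    (he : (∏ i ∈ Finset.univ.filter (fun i : Fin (k + 1) => (i : ℕ) < k - 1),
        (Polynomial.X - Polynomial.C (β i))) =
      ∑ j ∈ Finset.range k, Polynomial.C (e j) * Q j) :
    ∀ j ≤ k - 1, 0 < e j := by
  obtain ⟨m, rfl⟩ : ∃ m, k = m + 1 := ⟨k - 1, by lia⟩
  refine stmt_12_general (isPositiveOn_gegFunctional hn) (fun _ ht => ht.2)
    (hQadj.isOrthogonalFor hn) (Fin.card_filter_val_lt.trans (min_eq_right (by lia)))
    (one_pos.trans_eq (hQadj.2.1 m).symm)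
    (fun p hp => hquad.gegFunctional_eq hP hn (by lia)) (fun j hj => ?_) he
  simp only [sum_compl_filter_val_lt, Lagrange.eval_nodal]
  exact hpos j (by lia)
end

section
/- Let μ_4 be the probability measure on [-1,1] with density (2/π)·√(1-t²), and let P_i^{(4)} denote the corresponding Gegenbauer polynomials. Let γ_1,…,γ_8 be the numbers -1, -(1+√5)/4, -1/2, (1-√5)/4, 0, (√5-1)/4, 1/2, (1+√5)/4, and let ν_1,…,ν_8 be the weights 1/120, 1/10, 1/6, 1/10, 1/4, 1/10, 1/6, 1/10. Then for every real polynomial f of degree at most 19 with ∫ f·P_{12}^{(4)} dμ_4 = 0, one has ∫ f dμ_4 = f(1)/120 + ∑_{i=1}^8 ν_i f(γ_i). -/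
open MeasureTheory Finset
open scoped Classical

/-!
The Chebyshev polynomials `U_n` are orthonormal for `μ_4`, so `P_n = U_n / (n + 1)`. Under
`t = cos θ` the measure `μ_4` is the image of the Haar measure of `SU(2)` under `g ↦ tr g / 2`, and
`U_n (tr g / 2)` is the character of the `n`-th symmetric power. The right-hand side of the
quadrature rule is the mean `Q f` of `f (tr g / 2)` over the binary icosahedral group, hence
`Q U_n` is the dimension of a space of invariants: for `n < 20` it is `1` if `n` is `0` or `12`, and
`0` otherwise. Therefore `Q f = ∫ f + ∫ f * U_12` whenever `deg f < 20`, and the second integral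
vanishes when `f` is orthogonal to `P_12`.

`Q U_n` is computed without representation theory, from the cyclic subgroups: the mean of `T_n`
over the real parts of the `N`-th roots of unity is `1` if `N ∣ n` and `0` otherwise, and
`U_n - U_(n-2) = 2 * T_n`.
-/

section

open Polynomial
open Polynomial.Chebyshev hiding C
open scoped Real

section PolynomialSequence

variable {K M : Type*} [Field K] [AddCommGroup M] [Module K M]

lemma eqOn_degreeLT_of_forall_sequence (S : Polynomial.Sequence K) {φ ψ : K[X] →ₗ[K] M} {n : ℕ}
    (h : ∀ i < n, φ (S i) = ψ (S i)) :
    Set.EqOn φ ψ (degreeLT K n) := by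
  rw [← S.span_degreeLT fun i _ ↦ (leadingCoeff_ne_zero.mpr (S.ne_zero i)).isUnit]
  exact LinearMap.eqOn_span' (Set.forall_mem_image.mpr h)

lemma map_mul_eq_zero_of_mem_degreeLT (L : K[X] →ₗ[K] M) (S : Polynomial.Sequence K) {n : ℕ}
    {p q : K[X]} (hq : ∀ i < n, L (S i * q) = 0) (hp : p ∈ degreeLT K n) : L (p * q) = 0 :=
  eqOn_degreeLT_of_forall_sequence S (φ := L ∘ₗ LinearMap.mulRight K q) (ψ := 0) hq hp

lemma sum_smul_eq_of_orthonormal (L : K[X] →ₗ[K] K) (S : Polynomial.Sequence K)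
    (hS : ∀ i j, L (S i * S j) = if i = j then 1 else 0) {n : ℕ} {p : K[X]}
    (hp : p ∈ degreeLT K n) : ∑ i ∈ range n, L (p * S i) • S i = p := by
  let expansion : K[X] →ₗ[K] K[X] :=
    ∑ i ∈ range n, (L ∘ₗ LinearMap.mulRight K (S i)).smulRight (S i)
  have h : ∀ j < n, expansion (S j) = S j := fun j hj ↦ by
    simp [expansion, hS, hj]
  simpa [expansion] using
    eqOn_degreeLT_of_forall_sequence S (ψ := LinearMap.id) h hp

end PolynomialSequence

/-- The Chebyshev polynomials of the second kind, indexed by their degree. -/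
noncomputable def chebyshevUSequence : Polynomial.Sequence ℝ where
  elems' n := U ℝ n
  degree_eq' n := degree_U_natCast ℝ n

lemma chebyshevUSequence_apply (n : ℕ) : chebyshevUSequence n = U ℝ n := rfl

lemma two_mul_one_sub_X_sq_mul_U_mul_U (R : Type*) [CommRing R] (m n : ℤ) :
    2 * (1 - X ^ 2) * (U R m * U R n) = T R (m - n) - T R (m + n + 2) := by
  induction n using Polynomial.Chebyshev.induct with
  | zero =>
    rw [U_zero, sub_zero, add_zero]
    linear_combination 2 * one_sub_X_sq_mul_U_eq_pol_in_T R m - T_add_two R m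
  | one =>
    rw [U_one, show m + 1 + 2 = (m + 1) + 2 by ring]
    linear_combination (norm := ring_nf) 4 * X * one_sub_X_sq_mul_U_eq_pol_in_T R m
      - T_sub_one R m + T_add_two R (m + 1) - 2 * X * T_add_two R m
  | add_two n ih₁ ih₀ =>
    rw [U_add_two]
    have hT := T_add_two R (m + n + 2)
    have hT' := T_sub_two R (m - n)
    linear_combination (norm := ring_nf) 2 * X * ih₁ - ih₀ + hT - hT'
  | neg_add_one n ih₀ ih₁ =>
    rw [U_sub_one]
    have hT := T_add_one R (m + n)
    have hT' := T_sub_one R (m - n + 2)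
    linear_combination (norm := ring_nf) 2 * X * ih₀ - ih₁ - hT + hT'

lemma gegWeight_four (t : ℝ) : gegWeight 4 t = (1 - t ^ 2) * √(1 - t ^ 2)⁻¹ := by
  rw [Real.sqrt_inv, ← div_eq_mul_inv, Real.div_sqrt, Real.sqrt_eq_rpow, gegWeight]
  norm_num

lemma integral_mul_gegWeight_four (f : ℝ → ℝ) :
    ∫ t in Set.Icc (-1 : ℝ) 1, f t * gegWeight 4 t = ∫ t, f t * (1 - t ^ 2) ∂measureT := by
  rw [integral_measureT, integral_Icc_eq_integral_Ioc,
    intervalIntegral.integral_of_le (by norm_num)]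
  simp only [gegWeight_four, mul_assoc]

lemma integral_gegWeight_four : ∫ t in Set.Icc (-1 : ℝ) 1, gegWeight 4 t = π / 2 := by
  rw [← integral_sqrt_one_sub_sq, integral_Icc_eq_integral_Ioc,
    intervalIntegral.integral_of_le (by norm_num)]
  simp only [gegWeight_four, Real.sqrt_inv, ← div_eq_mul_inv, Real.div_sqrt]

lemma gegInt_four (f : ℝ → ℝ) :
    gegInt 4 f = 2 / π * ∫ t, f t * (1 - t ^ 2) ∂measureT := by
  rw [gegInt, integral_gegWeight_four, integral_mul_gegWeight_four, inv_div]

/-- Integration of polynomials against `μ_4`, as a linear functional. -/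
noncomputable def gegIntFour : ℝ[X] →ₗ[ℝ] ℝ where
  toFun p := gegInt 4 (fun t ↦ p.eval t)
  map_add' p q := by
    simp only [gegInt_four, eval_add, add_mul]
    rw [integral_add (integrable_measureT (by fun_prop)) (integrable_measureT (by fun_prop)),
      mul_add]
  map_smul' c p := by
    simp only [gegInt_four, eval_smul, smul_eq_mul, mul_assoc, integral_const_mul,
      RingHom.id_apply]
    ring

lemma gegIntFour_apply (p : ℝ[X]) : gegIntFour p = gegInt 4 (fun t ↦ p.eval t) := rfl

lemma gegIntFour_mul (p q : ℝ[X]) :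
    gegIntFour (p * q) = gegInt 4 (fun t ↦ p.eval t * q.eval t) := by
  simp only [gegIntFour_apply, eval_mul]

lemma integral_eval_T_real_measureT (n : ℤ) :
    ∫ t, (T ℝ n).eval t ∂measureT = if n = 0 then π else 0 := by
  split_ifs with hn
  · rw [hn, integral_eval_T_real_measureT_zero]
  · exact integral_eval_T_real_measureT_of_ne_zero hn

lemma gegIntFour_U_mul_U (m n : ℕ) :
    gegIntFour (U ℝ m * U ℝ n) = if m = n then 1 else 0 := by
  have hUT (t : ℝ) : (U ℝ m * U ℝ n).eval t * (1 - t ^ 2) =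
      ((T ℝ (m - n)).eval t - (T ℝ (m + n + 2)).eval t) / 2 := by
    have h := congrArg (eval t) (two_mul_one_sub_X_sq_mul_U_mul_U ℝ m n)
    simp only [eval_mul, eval_sub, eval_pow, eval_ofNat, eval_one, eval_X] at h ⊢
    linear_combination h / 2
  have hpos : (m + n + 2 : ℤ) ≠ 0 := by omega
  rw [gegIntFour_apply, gegInt_four]
  simp only [hUT]
  rw [integral_div,
    integral_sub (integrable_measureT (by fun_prop)) (integrable_measureT (by fun_prop)),
    integral_eval_T_real_measureT, integral_eval_T_real_measureT, if_neg hpos, sub_zero]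
  simp only [sub_eq_zero, Nat.cast_inj]
  split_ifs
  · field_simp
  · rw [zero_div, mul_zero]

lemma gegIntFour_U (n : ℕ) : gegIntFour (U ℝ n) = if n = 0 then 1 else 0 := by
  simpa using gegIntFour_U_mul_U n 0

namespace IsGegenbauer

variable {P : ℕ → ℝ[X]}

/-- A Gegenbauer family as a polynomial sequence in the sense of `Polynomial.Sequence`. -/
noncomputable def toSequence {n : ℕ} (hP : IsGegenbauer n P) : Polynomial.Sequence ℝ where
  elems' := P
  degree_eq' i := by
    have hne : P i ≠ 0 := fun h ↦ by simpa [h] using hP.2.1 i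
    rw [degree_eq_natDegree hne, hP.1 i]

lemma toSequence_apply {n : ℕ} (hP : IsGegenbauer n P) (i : ℕ) : hP.toSequence i = P i := rfl

lemma gegIntFour_mul_eq_zero (hP : IsGegenbauer 4 P) {n : ℕ} {p : ℝ[X]}
    (hp : p ∈ degreeLT ℝ n) :
    gegIntFour (p * P n) = 0 :=
  map_mul_eq_zero_of_mem_degreeLT gegIntFour hP.toSequence
    (fun i hi ↦ (gegIntFour_mul _ _).trans (hP.2.2 i n hi.ne)) hp

lemma U_eq_smul (hP : IsGegenbauer 4 P) (n : ℕ) : U ℝ n = (n + 1 : ℝ) • P n := by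
  set c := gegIntFour (P n * U ℝ n)
  have hdeg : P n ∈ degreeLT ℝ (n + 1) := by
    rw [mem_degreeLT, ← hP.toSequence_apply, hP.toSequence.degree_eq]
    exact_mod_cast n.lt_succ_self
  have hlower : ∀ i ∈ range n, gegIntFour (P n * U ℝ i) • U ℝ i = 0 := fun i hi ↦ by
    rw [mul_comm, hP.gegIntFour_mul_eq_zero, zero_smul]
    rw [mem_degreeLT, degree_U_natCast]
    exact_mod_cast mem_range.mp hi
  have hPU : c • U ℝ n = P n := by
    have h := sum_smul_eq_of_orthonormal gegIntFour chebyshevUSequence gegIntFour_U_mul_U hdeg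
    simp only [chebyshevUSequence_apply] at h
    rwa [sum_range_succ, sum_eq_zero hlower, zero_add] at h
  have hc : (n + 1) * c = 1 := by
    have h := congrArg (eval 1) hPU
    rw [eval_smul, U_eval_one, hP.2.1 n, smul_eq_mul, mul_comm] at h
    exact_mod_cast h
  rw [← hPU, smul_smul, hc, one_smul]

end IsGegenbauer

/-- The mean of a polynomial over the real parts of the `N`-th roots of unity. -/
noncomputable def rootsOfUnityMean (N : ℕ) : ℝ[X] →ₗ[ℝ] ℝ :=
  (N : ℝ)⁻¹ • ∑ j ∈ range N, leval (Real.cos (2 * π * j / N))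

lemma rootsOfUnityMean_apply (N : ℕ) (p : ℝ[X]) :
    rootsOfUnityMean N p = (∑ j ∈ range N, p.eval (Real.cos (2 * π * j / N))) / N := by
  simp [rootsOfUnityMean, leval, div_eq_inv_mul]

lemma sum_zpow_pow_of_isPrimitiveRoot {K : Type*} [Field K] {ζ : K} {N : ℕ}
    (hζ : IsPrimitiveRoot ζ N) (n : ℤ) :
    ∑ j ∈ range N, (ζ ^ n) ^ j = if (N : ℤ) ∣ n then (N : K) else 0 := by
  split_ifs with h
  · simp [(hζ.zpow_eq_one_iff_dvd n).mpr h]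
  · have hpow : (ζ ^ n) ^ N = 1 := by
      rw [← zpow_natCast, zpow_comm, zpow_natCast, hζ.pow_eq_one, one_zpow]
    rw [geom_sum_eq ((hζ.zpow_eq_one_iff_dvd n).not.mpr h), hpow, sub_self, zero_div]

lemma cos_int_mul_eq_re (N : ℕ) (n : ℤ) (j : ℕ) :
    Real.cos (n * (2 * π * j / N)) = ((Complex.exp (2 * π * Complex.I / N) ^ n) ^ j).re := by
  rw [← Complex.exp_int_mul, ← Complex.exp_nat_mul, ← Complex.exp_ofReal_mul_I_re]
  congr 2
  push_cast
  ring

lemma rootsOfUnityMean_T {N : ℕ} (hN : N ≠ 0) (n : ℤ) :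
    rootsOfUnityMean N (T ℝ n) = if (N : ℤ) ∣ n then 1 else 0 := by
  have hN' : (N : ℝ) ≠ 0 := Nat.cast_ne_zero.mpr hN
  rw [rootsOfUnityMean_apply]
  simp only [T_real_cos, cos_int_mul_eq_re]
  rw [← Complex.re_sum, sum_zpow_pow_of_isPrimitiveRoot (Complex.isPrimitiveRoot_exp N hN)]
  split_ifs
  · rw [Complex.natCast_re, div_self hN']
  · rw [Complex.zero_re, zero_div]

lemma rootsOfUnityMean_two_mul_add_one (m : ℕ) (p : ℝ[X]) :
    rootsOfUnityMean (2 * (m + 1)) p = (p.eval 1 + p.eval (-1) +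
      2 * ∑ j ∈ range m, p.eval (Real.cos ((j + 1) * π / (m + 1)))) / (2 * (m + 1)) := by
  have hm : (m + 1 : ℝ) ≠ 0 := by positivity
  let g (j : ℕ) : ℝ := p.eval (Real.cos (j * π / (m + 1)))
  have hg_zero : g 0 = p.eval 1 := by simp [g]
  have hg_mid : g (m + 1) = p.eval (-1) := by
    simp only [g, Nat.cast_add_one, mul_div_cancel_left₀ π hm, Real.cos_pi]
  have hg_reflect (j : ℕ) (hj : j ∈ range m) : g (m + 1 + (j + 1)) = g (m - 1 - j + 1) := by
    have hjm : m - 1 - j + 1 + (j + 1) = m + 1 := by have := mem_range.mp hj; omega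
    have hjm' : ((m - 1 - j + 1 : ℕ) + (j + 1 : ℕ) : ℝ) = m + 1 := mod_cast hjm
    simp only [g]
    rw [← Real.cos_two_pi_sub]
    congr 2
    field_simp
    push_cast at hjm' ⊢
    linear_combination -hjm'
  have hg_upper : ∑ j ∈ range m, g (m + 1 + (j + 1)) = ∑ j ∈ range m, g (j + 1) := by
    rw [sum_congr rfl hg_reflect, sum_range_reflect fun j ↦ g (j + 1)]
  calc rootsOfUnityMean (2 * (m + 1)) p
    _ = (∑ j ∈ range (2 * (m + 1)), g j) / (2 * (m + 1)) := by
      rw [rootsOfUnityMean_apply]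
      push_cast
      simp only [g, mul_assoc, mul_div_mul_left _ _ (two_ne_zero' ℝ), mul_comm π]
    _ = (g 0 + g (m + 1) + 2 * ∑ j ∈ range m, g (j + 1)) / (2 * (m + 1)) := by
      rw [two_mul (m + 1), sum_range_add, sum_range_succ', sum_range_succ', hg_upper, add_zero]
      ring
    _ = _ := by simp only [hg_zero, hg_mid, g, Nat.cast_add_one]

lemma cos_two_mul_pi_div_five : Real.cos (2 * π / 5) = (√5 - 1) / 4 := by
  rw [mul_div_assoc, Real.cos_two_mul, Real.cos_pi_div_five]
  linear_combination Real.sq_sqrt (show (0 : ℝ) ≤ 5 by norm_num) / 8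

lemma rootsOfUnityMean_two (p : ℝ[X]) :
    rootsOfUnityMean 2 p = (p.eval 1 + p.eval (-1)) / 2 := by
  simpa using rootsOfUnityMean_two_mul_add_one 0 p

lemma rootsOfUnityMean_four (p : ℝ[X]) :
    rootsOfUnityMean 4 p = (p.eval 1 + p.eval (-1) + 2 * p.eval 0) / 4 := by
  have h := rootsOfUnityMean_two_mul_add_one 1 p
  norm_num at h
  exact h

lemma rootsOfUnityMean_six (p : ℝ[X]) :
    rootsOfUnityMean 6 p =
      (p.eval 1 + p.eval (-1) + 2 * (p.eval (1 / 2) + p.eval (-(1 / 2)))) / 6 := by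
  have hcos : Real.cos (2 * π / 3) = -(1 / 2) := by
    rw [← Real.cos_pi_div_three, ← Real.cos_pi_sub]
    ring_nf
  have h := rootsOfUnityMean_two_mul_add_one 2 p
  norm_num [sum_range_succ, hcos] at h ⊢
  exact h

lemma rootsOfUnityMean_ten (p : ℝ[X]) :
    rootsOfUnityMean 10 p =
      (p.eval 1 + p.eval (-1) + 2 * (p.eval ((1 + √5) / 4) + p.eval ((√5 - 1) / 4) +
        p.eval ((1 - √5) / 4) + p.eval (-(1 + √5) / 4))) / 10 := by
  have hcos₃ : Real.cos (3 * π / 5) = (1 - √5) / 4 := by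
    rw [show 3 * π / 5 = π - 2 * π / 5 by ring, Real.cos_pi_sub, cos_two_mul_pi_div_five]
    ring
  have hcos₄ : Real.cos (4 * π / 5) = -(1 + √5) / 4 := by
    rw [show 4 * π / 5 = π - π / 5 by ring, Real.cos_pi_sub, Real.cos_pi_div_five, neg_div]
  have h := rootsOfUnityMean_two_mul_add_one 4 p
  norm_num [sum_range_succ, cos_two_mul_pi_div_five, hcos₃, hcos₄] at h ⊢
  exact h

/-- `f ↦ ∑ g, f (tr g / 2) / 120` over the binary icosahedral group, written as an alternating
sum over cyclic subgroups: the noncentral elements are partitioned by the `6`, `10` and `15`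
maximal cyclic subgroups of orders `10`, `6` and `4`, all of which contain the centre `±1`. -/
noncomputable def icosahedralMean : ℝ[X] →ₗ[ℝ] ℝ :=
  (1 / 2 : ℝ) • (rootsOfUnityMean 10 + rootsOfUnityMean 6 + rootsOfUnityMean 4
    - rootsOfUnityMean 2)

lemma icosahedralMean_apply (p : ℝ[X]) :
    icosahedralMean p =
      p.eval 1 / 120 +
        ((1 / 120) * p.eval (-1) +
          (1 / 10) * p.eval (-(1 + √5) / 4) +
          (1 / 6) * p.eval (-(1 / 2)) +
          (1 / 10) * p.eval ((1 - √5) / 4) +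
          (1 / 4) * p.eval 0 +
          (1 / 10) * p.eval ((√5 - 1) / 4) +
          (1 / 6) * p.eval (1 / 2) +
          (1 / 10) * p.eval ((1 + √5) / 4)) := by
  simp only [icosahedralMean, LinearMap.smul_apply, LinearMap.sub_apply, LinearMap.add_apply,
    rootsOfUnityMean_two, rootsOfUnityMean_four, rootsOfUnityMean_six, rootsOfUnityMean_ten,
    smul_eq_mul]
  ring

lemma icosahedralMean_T (n : ℤ) :
    icosahedralMean (T ℝ n) = ((if 10 ∣ n then 1 else 0) + (if 6 ∣ n then 1 else 0) +
      (if 4 ∣ n then 1 else 0) - (if 2 ∣ n then 1 else 0)) / 2 := by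
  simp only [icosahedralMean, LinearMap.smul_apply, LinearMap.sub_apply, LinearMap.add_apply,
    rootsOfUnityMean_T, smul_eq_mul, ne_eq, OfNat.ofNat_ne_zero, not_false_eq_true, Nat.cast_ofNat]
  ring

lemma icosahedralMean_U_add_two (n : ℤ) :
    icosahedralMean (U ℝ (n + 2)) =
      2 * icosahedralMean (T ℝ (n + 2)) + icosahedralMean (U ℝ n) := by
  rw [U_eq_two_mul_T_add_U, map_add, ← map_ofNat C, ← smul_eq_C_mul, map_smul, smul_eq_mul]

lemma icosahedralMean_U_two_mul_add_one (n : ℕ) : icosahedralMean (U ℝ (2 * n + 1)) = 0 := by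
  induction n with
  | zero =>
    have h : U ℝ 1 = (2 : ℝ) • T ℝ 1 := by rw [U_one, T_one, smul_eq_C_mul, map_ofNat]
    rw [Nat.cast_zero, mul_zero, zero_add, h, map_smul, icosahedralMean_T]
    norm_num
  | succ n ih =>
    have hn : (2 * (n + 1 : ℕ) + 1 : ℤ) = 2 * n + 1 + 2 := by push_cast; ring
    have h10 : ¬ (10 : ℤ) ∣ 2 * n + 1 + 2 := by omega
    have h6 : ¬ (6 : ℤ) ∣ 2 * n + 1 + 2 := by omega
    have h4 : ¬ (4 : ℤ) ∣ 2 * n + 1 + 2 := by omega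
    have h2 : ¬ (2 : ℤ) ∣ 2 * n + 1 + 2 := by omega
    rw [hn, icosahedralMean_U_add_two, ih, icosahedralMean_T, if_neg h10, if_neg h6, if_neg h4,
      if_neg h2]
    norm_num

lemma icosahedralMean_U_two_mul (n : ℕ) :
    icosahedralMean (U ℝ (2 * n)) = (n / 5 + n / 3 + n / 2 + 1 : ℕ) - n := by
  induction n with
  | zero =>
    rw [Nat.cast_zero, mul_zero, U_zero, ← T_zero, icosahedralMean_T]
    norm_num
  | succ n ih =>
    have hn : (2 * (n + 1 : ℕ) : ℤ) = 2 * n + 2 := by push_cast; ring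
    have h10 : (10 : ℤ) ∣ 2 * n + 2 ↔ 5 ∣ n + 1 := by omega
    have h6 : (6 : ℤ) ∣ 2 * n + 2 ↔ 3 ∣ n + 1 := by omega
    have h4 : (4 : ℤ) ∣ 2 * n + 2 ↔ 2 ∣ n + 1 := by omega
    have h2 : (2 : ℤ) ∣ 2 * n + 2 := by omega
    rw [hn, icosahedralMean_U_add_two, ih, icosahedralMean_T, if_pos h2]
    simp only [h10, h6, h4, Nat.succ_div]
    push_cast
    ring

lemma icosahedralMean_U_of_lt {n : ℕ} (hn : n < 20) :
    icosahedralMean (U ℝ n) = if n = 0 ∨ n = 12 then 1 else 0 := by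
  obtain ⟨k, rfl | rfl⟩ := n.even_or_odd'
  · have hk : k < 10 := by omega
    rw [Nat.cast_mul, Nat.cast_ofNat, icosahedralMean_U_two_mul]
    interval_cases k <;> norm_num
  · have hodd : ¬(2 * k + 1 = 0 ∨ 2 * k + 1 = 12) := by omega
    rw [if_neg hodd, Nat.cast_add, Nat.cast_mul, Nat.cast_ofNat, Nat.cast_one,
      icosahedralMean_U_two_mul_add_one]

lemma icosahedralMean_eq_gegIntFour_add {p : ℝ[X]} (hp : p ∈ degreeLT ℝ 20) :
    icosahedralMean p = gegIntFour p + gegIntFour (p * U ℝ 12) := by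
  refine eqOn_degreeLT_of_forall_sequence chebyshevUSequence (φ := icosahedralMean)
    (ψ := gegIntFour + gegIntFour ∘ₗ LinearMap.mulRight ℝ (U ℝ 12)) (fun n hn ↦ ?_) hp
  have h12 := gegIntFour_U_mul_U n 12
  rw [Nat.cast_ofNat] at h12
  rw [chebyshevUSequence_apply, icosahedralMean_U_of_lt hn, LinearMap.add_apply,
    LinearMap.comp_apply, LinearMap.mulRight_apply, gegIntFour_U, h12]
  grind

end

/-- the third-level `1/120`-quadrature rule coming from the `600`-cell,
exact on `𝒫₁₉ ∩ {P₁₂^{(4)}}^⊥`. -/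
theorem stmt_18 (P : ℕ → Polynomial ℝ) (hP : IsGegenbauer 4 P)
    (f : Polynomial ℝ) (hdeg : f.natDegree ≤ 19)
    (horth : gegInt 4 (fun t => f.eval t * (P 12).eval t) = 0) :
    gegInt 4 (fun t => f.eval t) =
      f.eval 1 / 120 +
        ((1 / 120) * f.eval (-1) +
          (1 / 10) * f.eval (-(1 + Real.sqrt 5) / 4) +
          (1 / 6) * f.eval (-(1 / 2)) +
          (1 / 10) * f.eval ((1 - Real.sqrt 5) / 4) +
          (1 / 4) * f.eval 0 +
          (1 / 10) * f.eval ((Real.sqrt 5 - 1) / 4) +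
          (1 / 6) * f.eval (1 / 2) +
          (1 / 10) * f.eval ((1 + Real.sqrt 5) / 4)) := by
  have hf : f ∈ Polynomial.degreeLT ℝ 20 :=
    Polynomial.mem_degreeLT.mpr <|
      f.degree_le_natDegree.trans_lt (mod_cast Nat.lt_succ_of_le hdeg)
  have hU : gegIntFour (f * Polynomial.Chebyshev.U ℝ 12) = 0 := by
    rw [show (12 : ℤ) = (12 : ℕ) from rfl, hP.U_eq_smul 12, mul_smul_comm, map_smul,
      gegIntFour_mul, horth, smul_zero]
  rw [← gegIntFour_apply, ← icosahedralMean_apply, icosahedralMean_eq_gegIntFour_add hf, hU,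
    add_zero]
end
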